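/- (Error bound of value iteration with the Boltzmann softmax operator, first part) Given a finite Markov decision process, let V* satisfy T_m V* = V*, fix β > 0, let V₀ : S → ℝ be arbitrary, and define V_{t+1} = T_β V_t. Then limsup_{t→∞} ‖V_t − V*‖∞ ≤ log(|A|)/(β·(1−γ)). -/

import Mathlib

/-!
The Boltzmann average misses the maximum by at most `log |A| / β` (`fmax_sub_boltz_le`): if `q` is
the Gibbs distribution of `x`, then `β * boltz β x = log Z - H(q)`, where `log Z ≥ β * max x` and
the entropy satisfies `H(q) ≤ log |A|`. Since `Tm` is a `γ`-contraction in the sup norm, the errors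
`d t = ‖V t - V*‖` satisfy `d (t + 1) ≤ γ * d t + log |A| / β`. Hence
`d t ≤ γ ^ t * d 0 + log |A| / (β * (1 - γ))`, whose right-hand side tends to the claimed bound.
-/

noncomputable def boltz {ι : Type*} [Fintype ι] (β : ℝ) (x : ι → ℝ) : ℝ :=
  (∑ i, Real.exp (β * x i) * x i) / ∑ i, Real.exp (β * x i)

noncomputable def fmax {ι : Type*} [Fintype ι] [Nonempty ι] (x : ι → ℝ) : ℝ :=
  Finset.univ.sup' Finset.univ_nonempty x

noncomputable def fmin {ι : Type*} [Fintype ι] [Nonempty ι] (x : ι → ℝ) : ℝ :=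
  Finset.univ.inf' Finset.univ_nonempty x

noncomputable def Qval {S A : Type*} [Fintype S] (p : S → A → S → ℝ) (r : S → A → ℝ)
    (γ : ℝ) (V : S → ℝ) (s : S) (a : A) : ℝ :=
  r s a + γ * ∑ s', p s a s' * V s'

noncomputable def Tm {S A : Type*} [Fintype S] [Fintype A] [Nonempty A]
    (p : S → A → S → ℝ) (r : S → A → ℝ) (γ : ℝ) (V : S → ℝ) (s : S) : ℝ :=
  fmax (Qval p r γ V s)

noncomputable def Tb {S A : Type*} [Fintype S] [Fintype A]
    (p : S → A → S → ℝ) (r : S → A → ℝ) (γ : ℝ) (β : ℝ) (V : S → ℝ) (s : S) : ℝ :=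
  boltz β (Qval p r γ V s)

noncomputable def supNorm {S : Type*} [Fintype S] [Nonempty S] (V : S → ℝ) : ℝ :=
  fmax (fun s => |V s|)

open Filter

lemma le_fmax {ι : Type*} [Fintype ι] [Nonempty ι] (x : ι → ℝ) (i : ι) : x i ≤ fmax x :=
  Finset.le_sup' x (Finset.mem_univ i)

lemma fmax_le {ι : Type*} [Fintype ι] [Nonempty ι] {x : ι → ℝ} {c : ℝ} (h : ∀ i, x i ≤ c) :
    fmax x ≤ c :=
  Finset.sup'_le _ _ fun i _ => h i

lemma boltz_le_fmax {ι : Type*} [Fintype ι] [Nonempty ι] (β : ℝ) (x : ι → ℝ) :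
    boltz β x ≤ fmax x := by
  have hZ : 0 < ∑ i, Real.exp (β * x i) :=
    Finset.sum_pos (fun i _ => Real.exp_pos _) Finset.univ_nonempty
  rw [boltz, div_le_iff₀ hZ, Finset.mul_sum]
  refine Finset.sum_le_sum fun i _ => ?_
  rw [mul_comm]
  exact mul_le_mul_of_nonneg_right (le_fmax x i) (Real.exp_pos _).le

/-- The entropy bound `H ≤ log |ι|` in disguise: it results from summing the inequality
`u + 1 ≤ exp u` at `u = log Z - log |ι| - β * x i` with weights `exp (β * x i)`. -/
lemma fmax_sub_boltz_le {ι : Type*} [Fintype ι] [Nonempty ι] {β : ℝ} (hβ : 0 < β) (x : ι → ℝ) :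
    fmax x - boltz β x ≤ Real.log (Fintype.card ι) / β := by
  set Z := ∑ i, Real.exp (β * x i) with hZdef
  have hZ : 0 < Z := Finset.sum_pos (fun i _ => Real.exp_pos _) Finset.univ_nonempty
  have hn : (0 : ℝ) < Fintype.card ι := by exact_mod_cast Fintype.card_pos
  set L := Real.log (Fintype.card ι) with hL
  have hmax : β * fmax x ≤ Real.log Z := by
    rw [mul_comm, ← le_div_iff₀ hβ]
    refine fmax_le fun i => ?_
    rw [le_div_iff₀ hβ, mul_comm, Real.le_log_iff_exp_le hZ]
    exact Finset.single_le_sum (f := fun i => Real.exp (β * x i))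
      (fun j _ => (Real.exp_pos _).le) (Finset.mem_univ i)
  have hterm : ∀ i, Real.exp (β * x i) * (Real.log Z - L - β * x i + 1)
      ≤ Z / Fintype.card ι := fun i => by
    have h := mul_le_mul_of_nonneg_left (Real.add_one_le_exp (Real.log Z - L - β * x i))
      (Real.exp_pos (β * x i)).le
    rwa [← Real.exp_add, add_sub_cancel, Real.exp_sub, Real.exp_log hZ, hL,
      Real.exp_log hn] at h
  have hsum := Finset.sum_le_sum fun i (_ : i ∈ Finset.univ) => hterm i
  have hlhs : ∑ i, Real.exp (β * x i) * (Real.log Z - L - β * x i + 1)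
      = Z * (Real.log Z - L + 1) - β * ∑ i, Real.exp (β * x i) * x i := by
    rw [hZdef, Finset.sum_mul, Finset.mul_sum, ← Finset.sum_sub_distrib]
    exact Finset.sum_congr rfl fun i _ => by ring
  have hrhs : ∑ _i : ι, Z / Fintype.card ι = Z := by
    rw [Finset.sum_const, Finset.card_univ, nsmul_eq_mul]
    field_simp
  have hb : ∑ i, Real.exp (β * x i) * x i = Z * boltz β x := by
    rw [boltz, ← hZdef]
    field_simp
  rw [hlhs, hrhs, hb] at hsum
  have h0 : Z * (Real.log Z - L - β * boltz β x) ≤ 0 := by linarith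
  have h1 : Real.log Z - L - β * boltz β x ≤ 0 := nonpos_of_mul_nonpos_right h0 hZ
  rw [le_div_iff₀ hβ]
  linarith

lemma abs_Qval_sub_le {S A : Type*} [Fintype S] [Nonempty S]
    (p : S → A → S → ℝ) (hp0 : ∀ s a s', 0 ≤ p s a s') (hp1 : ∀ s a, ∑ s', p s a s' = 1)
    (r : S → A → ℝ) {γ : ℝ} (hγ0 : 0 ≤ γ) (V W : S → ℝ) (s : S) (a : A) :
    |Qval p r γ V s a - Qval p r γ W s a| ≤ γ * supNorm (fun s => V s - W s) := by
  have h : Qval p r γ V s a - Qval p r γ W s a = γ * ∑ s', p s a s' * (V s' - W s') := by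
    simp only [Qval, mul_sub, Finset.sum_sub_distrib]
    ring
  rw [h, abs_mul, abs_of_nonneg hγ0]
  refine mul_le_mul_of_nonneg_left ?_ hγ0
  calc |∑ s', p s a s' * (V s' - W s')|
      ≤ ∑ s', |p s a s' * (V s' - W s')| := Finset.abs_sum_le_sum_abs _ _
    _ ≤ ∑ s', p s a s' * supNorm (fun s => V s - W s) := by
        refine Finset.sum_le_sum fun s' _ => ?_
        rw [abs_mul, abs_of_nonneg (hp0 s a s')]
        exact mul_le_mul_of_nonneg_left (le_fmax (fun s => |V s - W s|) s') (hp0 s a s')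
    _ = supNorm (fun s => V s - W s) := by rw [← Finset.sum_mul, hp1, one_mul]

lemma abs_Tm_sub_le {S A : Type*} [Fintype S] [Nonempty S] [Fintype A] [Nonempty A]
    (p : S → A → S → ℝ) (hp0 : ∀ s a s', 0 ≤ p s a s') (hp1 : ∀ s a, ∑ s', p s a s' = 1)
    (r : S → A → ℝ) {γ : ℝ} (hγ0 : 0 ≤ γ) (V W : S → ℝ) (s : S) :
    |Tm p r γ V s - Tm p r γ W s| ≤ γ * supNorm (fun s => V s - W s) := by
  have h := fun a => abs_le.1 (abs_Qval_sub_le p hp0 hp1 r hγ0 V W s a)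
  have h1 : Tm p r γ V s ≤ Tm p r γ W s + γ * supNorm (fun s => V s - W s) :=
    fmax_le fun a => by
      have := le_fmax (Qval p r γ W s) a
      unfold Tm
      linarith [(h a).2]
  have h2 : Tm p r γ W s ≤ Tm p r γ V s + γ * supNorm (fun s => V s - W s) :=
    fmax_le fun a => by
      have := le_fmax (Qval p r γ V s) a
      unfold Tm
      linarith [(h a).1]
  exact abs_le.2 ⟨by linarith, by linarith⟩

theorem fixed_boltz_vi_error_bound_log {S A : Type*} [Fintype S] [Fintype A] [Nonempty S] [Nonempty A]
    (p : S → A → S → ℝ) (hp0 : ∀ s a s', 0 ≤ p s a s') (hp1 : ∀ s a, ∑ s', p s a s' = 1)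
    (r : S → A → ℝ) (γ : ℝ) (hγ0 : 0 ≤ γ) (hγ1 : γ < 1)
    (Vstar : S → ℝ) (hVstar : Tm p r γ Vstar = Vstar)
    (β : ℝ) (hβ : 0 < β)
    (V₀ : S → ℝ) (Vseq : ℕ → S → ℝ)
    (hV0 : Vseq 0 = V₀)
    (hVsucc : ∀ t, Vseq (t + 1) = Tb p r γ β (Vseq t)) :
    Filter.limsup (fun t => supNorm (fun s => Vseq t s - Vstar s)) atTop
      ≤ Real.log (Fintype.card A) / (β * (1 - γ)) := by
  set d : ℕ → ℝ := fun t => supNorm (fun s => Vseq t s - Vstar s) with hd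
  set C := Real.log (Fintype.card A) / β with hC
  have h1γ : 0 < 1 - γ := by linarith
  have hd0 : ∀ t, 0 ≤ d t := fun t =>
    (abs_nonneg _).trans (le_fmax (fun s => |Vseq t s - Vstar s|) (Classical.arbitrary S))
  have hstep : ∀ t, d (t + 1) ≤ γ * d t + C := fun t => by
    refine fmax_le fun s => ?_
    have h1 := abs_le.1 (abs_Tm_sub_le p hp0 hp1 r hγ0 (Vseq t) Vstar s)
    have h2 : Tb p r γ β (Vseq t) s ≤ Tm p r γ (Vseq t) s := boltz_le_fmax _ _
    have h3 : Tm p r γ (Vseq t) s - Tb p r γ β (Vseq t) s ≤ C := fmax_sub_boltz_le hβ _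
    rw [hVstar] at h1
    rw [hVsucc]
    change -(γ * d t) ≤ _ ∧ _ ≤ γ * d t at h1
    exact abs_le.2 ⟨by linarith [h1.1], by linarith [h1.2]⟩
  have hbound : ∀ t, d t ≤ γ ^ t * d 0 + C / (1 - γ) := by
    intro t
    induction t with
    | zero =>
      have : 0 ≤ C / (1 - γ) :=
        div_nonneg (div_nonneg (Real.log_natCast_nonneg _) hβ.le) h1γ.le
      simpa using this
    | succ t ih =>
      have hfix : γ * (C / (1 - γ)) + C = C / (1 - γ) := by
        field_simp
        ring
      calc d (t + 1) ≤ γ * d t + C := hstep t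
        _ ≤ γ * (γ ^ t * d 0 + C / (1 - γ)) + C := by gcongr
        _ = γ ^ (t + 1) * d 0 + (γ * (C / (1 - γ)) + C) := by ring
        _ = γ ^ (t + 1) * d 0 + C / (1 - γ) := by rw [hfix]
  have hlim : Tendsto (fun t => γ ^ t * d 0 + C / (1 - γ)) atTop (nhds (C / (1 - γ))) := by
    simpa using ((tendsto_pow_atTop_nhds_zero_of_lt_one hγ0 hγ1).mul_const (d 0)).add_const
      (C / (1 - γ))
  rw [← div_div, ← hC, ← hlim.limsup_eq]
  -- In `ℝ`, monotonicity of `limsup` needs the sequences to be bounded on the relevant sides.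
  exact limsup_le_limsup (Eventually.of_forall hbound)
    (isBoundedUnder_of ⟨0, hd0⟩).isCoboundedUnder_le hlim.isBoundedUnder_le
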